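/- arXiv:math/0512182 — 2 statements merged into one kernel-verified Lean document; each statement's English description precedes it below -/
import Mathlib

section
/- Let Λ be a free ℤ-module of rank 4, and let V = Λ/2Λ, a 4-dimensional vector space over 𝔽₂. Let G be a group acting linearly on Λ (hence on V and its exterior powers). Suppose the fixed subspace of G on V has dimension at least 2 (containing linearly independent e₁, e₂) and the fixed subspace of G on ∧²V has dimension at least 2. Then the fixed subspace of G on ∧³V is nonzero. -/
namespace ExteriorAlgebra

variable {K V : Type*} [Field K] [AddCommGroup V] [Module K V]

/-- Left contraction of the exterior algebra by a linear form. -/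
noncomputable def contract (d : Module.Dual K V) :
    ExteriorAlgebra K V →ₗ[K] ExteriorAlgebra K V :=
  CliffordAlgebra.contractLeft (Q := (0 : QuadraticForm K V)) d

theorem contract_ι_mul (d : Module.Dual K V) (v : V) (x : ExteriorAlgebra K V) :
    contract d (ι K v * x) = d v • x - ι K v * contract d x :=
  CliffordAlgebra.contractLeft_ι_mul (Q := (0 : QuadraticForm K V)) d v x

theorem contract_ι (d : Module.Dual K V) (v : V) :
    contract d (ι K v) = algebraMap K _ (d v) :=
  CliffordAlgebra.contractLeft_ι (Q := (0 : QuadraticForm K V)) d v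

/-- Contracting an element of degree two twice gives a scalar. -/
theorem contract_contract_mem_one (d d' : Module.Dual K V) {x : ExteriorAlgebra K V}
    (hx : x ∈ LinearMap.range (ι K : V →ₗ[K] ExteriorAlgebra K V) ^ 2) :
    contract d' (contract d x) ∈ (1 : Submodule K (ExteriorAlgebra K V)) := by
  rw [pow_two] at hx
  induction hx using Submodule.mul_induction_on' with
  | mem_mul_mem a ha b hb =>
    obtain ⟨u, rfl⟩ := ha
    obtain ⟨v, rfl⟩ := hb
    rw [contract_ι_mul, contract_ι, ← Algebra.commutes, ← Algebra.smul_def, map_sub, map_smul,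
      map_smul, contract_ι, contract_ι]
    exact sub_mem (Submodule.smul_mem _ _ (Submodule.algebraMap_mem _))
      (Submodule.smul_mem _ _ (Submodule.algebraMap_mem _))
  | add x _ y _ hx hy =>
    rw [map_add, map_add]
    exact add_mem hx hy

theorem eq_ι_mul_contract {d : Module.Dual K V} {v : V} (hd : d v = 1)
    {x : ExteriorAlgebra K V} (hx : ι K v * x = 0) : x = ι K v * contract d x := by
  have h := contract_ι_mul d v x
  rw [hx, map_zero, hd, one_smul] at h
  exact sub_eq_zero.mp h.symm

theorem _root_.LinearIndependent.exists_dual_apply_eq_single {ι : Type*} {e : ι → V}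
    (he : LinearIndependent K e) :
    ∃ d : ι → Module.Dual K V, ∀ i j, d i (e j) = Finsupp.single j (1 : K) i := by
  obtain ⟨g, hg⟩ := LinearMap.exists_leftInverse_of_injective (Finsupp.linearCombination K e)
    (LinearMap.ker_eq_bot.mpr he)
  refine ⟨fun i => Finsupp.lapply i ∘ₗ g, fun i j => ?_⟩
  have h := LinearMap.congr_fun hg (Finsupp.single j 1)
  simp only [LinearMap.comp_apply, Finsupp.linearCombination_single, one_smul,
    LinearMap.id_apply] at h
  simp [h]

/-- A bivector annihilated by two linearly independent vectors is a multiple of their product. -/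
theorem mem_span_of_ι_mul_eq_zero {e : Fin 2 → V} (he : LinearIndependent K e)
    {x : ExteriorAlgebra K V}
    (hx : x ∈ LinearMap.range (ι K : V →ₗ[K] ExteriorAlgebra K V) ^ 2)
    (h : ∀ i, ι K (e i) * x = 0) : x ∈ Submodule.span K {ι K (e 1) * ι K (e 0)} := by
  obtain ⟨d, hd⟩ := he.exists_dual_apply_eq_single
  have h₀ : x = ι K (e 0) * contract (d 0) x := eq_ι_mul_contract (by simp [hd]) (h 0)
  have h₁ : x = ι K (e 1) * contract (d 1) x := eq_ι_mul_contract (by simp [hd]) (h 1)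
  have h₁₀ : contract (d 1) x = -(ι K (e 0) * contract (d 1) (contract (d 0) x)) := by
    conv_lhs => rw [h₀]
    rw [contract_ι_mul]
    simp [hd]
  obtain ⟨c, hc⟩ := Submodule.mem_one.mp (contract_contract_mem_one (d 0) (d 1) hx)
  rw [h₁₀, ← hc, ← Algebra.commutes, ← Algebra.smul_def] at h₁
  refine Submodule.mem_span_singleton.mpr ⟨-c, ?_⟩
  rw [h₁]
  simp

end ExteriorAlgebra

/-- Let V be the 4-dimensional 𝔽₂-vector space Λ/2Λ (Λ free of rank 4)
with a linear action of a group G.  If the fixed subspace of G on V has dimension ≥ 2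
and the fixed subspace of G on ∧²V has dimension ≥ 2, then the fixed subspace of G on
∧³V is nonzero.  (Exterior powers realized as the graded pieces of the exterior
algebra.) -/
theorem fixed_wedge_three_nonzero {G V : Type*} [Group G] [AddCommGroup V]
    [Module (ZMod 2) V] [Module.Finite (ZMod 2) V]
    (hdim : Module.finrank (ZMod 2) V = 4)
    (ρ : G →* (V ≃ₗ[ZMod 2] V)) :
    ∀ piece : ℕ → Submodule (ZMod 2) (ExteriorAlgebra (ZMod 2) V),
      (piece = fun n =>
        (LinearMap.range (ExteriorAlgebra.ι (ZMod 2) : V →ₗ[ZMod 2] _)) ^ n) →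
    ∀ fixed : Submodule (ZMod 2) (ExteriorAlgebra (ZMod 2) V),
      (fixed = ⨅ g : G, LinearMap.ker
        ((ExteriorAlgebra.map (ρ g).toLinearMap).toLinearMap - LinearMap.id)) →
      2 ≤ Module.finrank (ZMod 2) ↥(piece 1 ⊓ fixed) →
      2 ≤ Module.finrank (ZMod 2) ↥(piece 2 ⊓ fixed) →
      piece 3 ⊓ fixed ≠ ⊥ := by
  intro piece hpiece fixed hfixed h₁ h₂ h₃
  have mem_fixed (x : ExteriorAlgebra (ZMod 2) V) :
      x ∈ fixed ↔ ∀ g, ExteriorAlgebra.map (ρ g).toLinearMap x = x := by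
    simp [hfixed, Submodule.mem_iInf, sub_eq_zero]
  obtain ⟨y, hy⟩ := exists_linearIndependent_of_le_finrank h₁
  have hι (i : Fin 2) : ∃ v, ExteriorAlgebra.ι (ZMod 2) v = (y i : ExteriorAlgebra (ZMod 2) V) := by
    have h := (y i).2.1
    simpa [hpiece] using h
  choose e he using hι
  have hli : LinearIndependent (ZMod 2) e := by
    refine LinearIndependent.of_comp (ExteriorAlgebra.ι (ZMod 2)) ?_
    rw [show ExteriorAlgebra.ι (ZMod 2) ∘ e = (piece 1 ⊓ fixed).subtype ∘ y from funext he]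
    exact hy.map' _ (Submodule.ker_subtype _)
  have hle : piece 2 ⊓ fixed ≤ Submodule.span (ZMod 2)
      {ExteriorAlgebra.ι (ZMod 2) (e 1) * ExteriorAlgebra.ι (ZMod 2) (e 0)} := by
    intro x hx
    refine ExteriorAlgebra.mem_span_of_ι_mul_eq_zero hli (by simpa [hpiece] using hx.1) fun i => ?_
    refine (Submodule.eq_bot_iff _).mp h₃ _ ⟨?_, (mem_fixed _).mpr fun g => ?_⟩
    · have hx₂ := hx.1
      simp only [hpiece] at hx₂ ⊢
      rw [pow_succ']
      exact Submodule.mul_mem_mul ⟨e i, rfl⟩ hx₂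
    · rw [map_mul, (mem_fixed x).mp hx.2, he, (mem_fixed _).mp (y i).2.2]
  have hrank := (Submodule.finrank_mono hle).trans (finrank_span_le_card _)
  simp only [Set.toFinset_singleton, Finset.card_singleton] at hrank
  omega
end

section
/- Let e₁, e₂ be linearly independent vectors in a 4-dimensional vector space V over a field, and let f ∈ ∧²V be an element not in the span of e₁∧e₂. Then e₁∧f ≠ 0 or e₂∧f ≠ 0 in ∧³V. -/
open CliffordAlgebra in
/-- Contracting twice sends the second exterior power to the scalars. -/
theorem exists_contractLeft_contractLeft_eq_algebraMap {R M : Type*} [CommRing R]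
    [AddCommGroup M] [Module R M] (d d' : Module.Dual R M) {f : ExteriorAlgebra R M}
    (hf : f ∈ (LinearMap.range (ExteriorAlgebra.ι R : M →ₗ[R] _)) ^ 2) :
    ∃ c : R, contractLeft (Q := (0 : QuadraticForm R M)) d' (contractLeft d f) =
      algebraMap R (ExteriorAlgebra R M) c := by
  rw [pow_two] at hf
  induction hf using Submodule.mul_induction_on' with
  | mem_mul_mem x hx y hy =>
    obtain ⟨a, rfl⟩ := hx
    obtain ⟨b, rfl⟩ := hy
    refine ⟨d a * d' b - d' a * d b, ?_⟩
    have hab : contractLeft (Q := (0 : QuadraticForm R M)) d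
        (CliffordAlgebra.ι 0 a * CliffordAlgebra.ι 0 b) =
        d a • CliffordAlgebra.ι 0 b - d b • CliffordAlgebra.ι 0 a := by
      rw [contractLeft_ι_mul, contractLeft_ι, ← Algebra.commutes, ← Algebra.smul_def]
    refine (congrArg (contractLeft (Q := (0 : QuadraticForm R M)) d') hab).trans ?_
    rw [map_sub, map_smul, map_smul, contractLeft_ι, contractLeft_ι, Algebra.smul_def,
      Algebra.smul_def, ← map_mul, ← map_mul, ← map_sub, mul_comm (d b)]
  | add x _ y _ hx hy =>
    obtain ⟨c, hc⟩ := hx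
    obtain ⟨c', hc'⟩ := hy
    refine ⟨c + c', ?_⟩
    rw [map_add, map_add, map_add, hc, hc']

open CliffordAlgebra in
/-- If `v ∧ f = 0` and `d v = 1`, then `f` is `v` wedged with the contraction of `f` by `d`. -/
theorem eq_ι_mul_contractLeft_of_ι_mul_eq_zero {R M : Type*} [CommRing R]
    [AddCommGroup M] [Module R M] {d : Module.Dual R M} {v : M} (hd : d v = 1)
    {f : CliffordAlgebra (0 : QuadraticForm R M)} (hf : CliffordAlgebra.ι 0 v * f = 0) :
    f = CliffordAlgebra.ι 0 v * contractLeft d f := by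
  have h := contractLeft_ι_mul (Q := (0 : QuadraticForm R M)) d v f
  rwa [hf, map_zero, hd, one_smul, eq_comm, sub_eq_zero] at h

/-- A linearly independent family over a field has a dual family of functionals. -/
theorem LinearIndependent.exists_dual_apply_eq_single_s7 {ι k V : Type*} [DecidableEq ι] [Field k]
    [AddCommGroup V] [Module k V] {v : ι → V} (hv : LinearIndependent k v) :
    ∃ d : ι → Module.Dual k V, ∀ i j, d i (v j) = if j = i then 1 else 0 := by
  obtain ⟨g, hg⟩ := LinearMap.exists_leftInverse_of_injective
    (Finsupp.linearCombination k v) (LinearMap.ker_eq_bot.2 hv)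
  refine ⟨fun i => Finsupp.lapply i ∘ₗ g, fun i j => ?_⟩
  have h := LinearMap.congr_fun hg (Finsupp.single j 1)
  simp only [LinearMap.comp_apply, Finsupp.linearCombination_single, one_smul,
    LinearMap.id_apply] at h
  simp [h, Finsupp.single_apply]


/-- If e₁, e₂ are linearly independent in a 4-dimensional vector space V
over a field and f ∈ ∧²V is not in the span of e₁∧e₂, then e₁∧f ≠ 0 or e₂∧f ≠ 0 in ∧³V.
(∧²V realized as the degree-2 graded piece of the exterior algebra.) -/
theorem wedge_nonzero {k V : Type*} [Field k] [AddCommGroup V] [Module k V]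
    [Module.Finite k V] (hdim : Module.finrank k V = 4)
    (e₁ e₂ : V) (hli : LinearIndependent k ![e₁, e₂])
    (f : ExteriorAlgebra k V)
    (hf2 : f ∈ (LinearMap.range (ExteriorAlgebra.ι k : V →ₗ[k] _)) ^ 2)
    (hfspan : f ∉ Submodule.span k {ExteriorAlgebra.ι k e₁ * ExteriorAlgebra.ι k e₂}) :
    ExteriorAlgebra.ι k e₁ * f ≠ 0 ∨ ExteriorAlgebra.ι k e₂ * f ≠ 0 := by
  by_contra! h
  obtain ⟨h₁, h₂⟩ := h
  obtain ⟨d, hd⟩ := hli.exists_dual_apply_eq_single_s7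
  have hd₁ : d 0 e₁ = 1 := by simpa using hd 0 0
  have hd₂ : d 1 e₂ = 1 := by simpa using hd 1 1
  have hd₂₁ : d 1 e₁ = 0 := by simpa using hd 1 0
  obtain ⟨c, hc⟩ := exists_contractLeft_contractLeft_eq_algebraMap (d 0) (d 1) hf2
  have hf₁ := eq_ι_mul_contractLeft_of_ι_mul_eq_zero hd₁ h₁
  have hf₂ := eq_ι_mul_contractLeft_of_ι_mul_eq_zero hd₂ h₂
  have hcontr := congrArg (CliffordAlgebra.contractLeft (d 1)) hf₁
  rw [CliffordAlgebra.contractLeft_ι_mul, hd₂₁, zero_smul, zero_sub] at hcontr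
  rw [hcontr, hc] at hf₂
  have hanti : ExteriorAlgebra.ι k e₂ * ExteriorAlgebra.ι k e₁ =
      -(ExteriorAlgebra.ι k e₁ * ExteriorAlgebra.ι k e₂) :=
    eq_neg_of_add_eq_zero_left (ExteriorAlgebra.ι_add_mul_swap e₂ e₁)
  refine hfspan (Submodule.mem_span_singleton.2 ⟨c, ?_⟩)
  refine Eq.trans ?_ hf₂.symm
  change _ = ExteriorAlgebra.ι k e₂ * -(ExteriorAlgebra.ι k e₁ * algebraMap k _ c)
  rw [mul_neg, ← mul_assoc, hanti, neg_mul, neg_neg, ← Algebra.commutes, ← Algebra.smul_def]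
end
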